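/- arXiv:0811.3859 — 4 statements merged into one kernel-verified Lean document; each statement's English description precedes it below -/
import Mathlib

section
/- Let X be a finite simple graph and let k ≥ 3 be an integer. Then the family of edge sets I = { A ⊆ E(X) : |A| ≤ k−1, or (|A| = k and A is not a star) } is the collection of independent sets of a matroid on E(X): it contains the empty set, is closed under taking subsets, and satisfies the augmentation axiom (if I₁, I₂ ∈ I with |I₁| < |I₂|, then there exists x ∈ I₂ \ I₁ with I₁ ∪ {x} ∈ I). -/
/-- A set of edges is a star if all its edges are incident to one common vertex. -/
def IsStar {V : Type*} (A : Finset (Sym2 V)) : Prop :=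
  ∃ v : V, ∀ e ∈ A, v ∈ e

/-- The independent sets of `St_k(X)`: sets `A` of edges of `X` with `|A| ≤ k-1`,
or `|A| = k` and `A` is not a star. -/
def StIndep {V : Type*} [Fintype V] [DecidableEq V] (X : SimpleGraph V)
    [DecidableRel X.Adj] (k : ℕ) (A : Finset (Sym2 V)) : Prop :=
  A ⊆ X.edgeFinset ∧ (A.card ≤ k - 1 ∨ (A.card = k ∧ ¬ IsStar A))

/-!
Every set of fewer than `k` edges is independent, so augmentation is automatic except when passing
from `k - 1` to `k` edges. There, suppose that `|I| = k - 1`, `|J| = k`, and adding any edge of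
`J \ I` to `I` yields a star. Since `2 ≤ k - 1`, the set `I` contains two distinct edges, which have
at most one vertex in common; so all these stars share one centre, and `J` is a star as well.
-/

open Finset

/-- The independent sets of the rank-`k` paving matroid on `E` whose dependent `k`-sets are those
satisfying `Dep`. No condition on `Dep` is built in, so augmentation from `k - 1` to `k` elements
can fail; `PavingIndep.exists_insert` takes it as a hypothesis on `Dep`. -/
def PavingIndep {α : Type*} (E : Set α) (Dep : Finset α → Prop) (k : ℕ) (A : Finset α) : Prop :=
  (A : Set α) ⊆ E ∧ (#A < k ∨ #A = k ∧ ¬ Dep A)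

namespace PavingIndep

variable {α : Type*} {E : Set α} {Dep : Finset α → Prop} {k : ℕ} {A B I J : Finset α}

theorem empty (hk : 0 < k) : PavingIndep E Dep k ∅ :=
  ⟨by simp, .inl (by simpa using hk)⟩

theorem card_le (hA : PavingIndep E Dep k A) : #A ≤ k :=
  hA.2.elim le_of_lt fun h => h.1.le

theorem subset (hB : PavingIndep E Dep k B) (hAB : A ⊆ B) : PavingIndep E Dep k A := by
  obtain rfl | hss := hAB.eq_or_ssubset
  · exact hB
  · exact ⟨(coe_subset.2 hAB).trans hB.1, .inl ((card_lt_card hss).trans_le hB.card_le)⟩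

theorem exists_insert [DecidableEq α]
    (exchange : ∀ I J : Finset α, #I + 1 = k → #J = k → ¬ Dep J → ∃ x ∈ J \ I, ¬ Dep (insert x I))
    (hI : PavingIndep E Dep k I) (hJ : PavingIndep E Dep k J) (hIJ : #I < #J) :
    ∃ x ∈ J \ I, PavingIndep E Dep k (insert x I) := by
  have insert_subset_ground {x : α} (hx : x ∈ J \ I) : (↑(insert x I) : Set α) ⊆ E := by
    rw [coe_insert]
    exact Set.insert_subset (hJ.1 (mem_sdiff.1 hx).1) hI.1
  have card_insert {x : α} (hx : x ∈ J \ I) : #(insert x I) = #I + 1 :=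
    card_insert_of_notMem (mem_sdiff.1 hx).2
  obtain hlt | htop : #I + 1 < k ∨ #I + 1 = k := lt_or_eq_of_le (hIJ.trans_le hJ.card_le)
  · obtain ⟨x, hxJ, hxI⟩ := exists_mem_notMem_of_card_lt_card hIJ
    have hx : x ∈ J \ I := mem_sdiff.2 ⟨hxJ, hxI⟩
    exact ⟨x, hx, insert_subset_ground hx, .inl ((card_insert hx).trans_lt hlt)⟩
  · obtain ⟨hJk, hJdep⟩ : #J = k ∧ ¬ Dep J := hJ.2.resolve_left (by omega)
    obtain ⟨x, hx, hdep⟩ := exchange I J htop hJk hJdep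
    exact ⟨x, hx, insert_subset_ground hx, .inr ⟨(card_insert hx).trans htop, hdep⟩⟩

end PavingIndep

section Star

variable {V : Type*}

theorem IsStar.center_unique {A : Finset (Sym2 V)} (hA : A.Nontrivial) {v w : V}
    (hv : ∀ e ∈ A, v ∈ e) (hw : ∀ e ∈ A, w ∈ e) : v = w := by
  obtain ⟨a, ha, b, hb, hab⟩ := hA
  by_contra hvw
  exact hab (Sym2.eq_of_ne_mem hvw (hv a ha) (hw a ha) (hv b hb) (hw b hb))

theorem IsStar.of_forall_insert [DecidableEq V] {I J : Finset (Sym2 V)} (hI : I.Nontrivial)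
    (hJI : ¬ J ⊆ I) (h : ∀ e ∈ J \ I, IsStar (insert e I)) : IsStar J := by
  obtain ⟨f, hf⟩ : (J \ I).Nonempty := sdiff_nonempty.2 hJI
  obtain ⟨v, hv⟩ := h f hf
  have hvI : ∀ e ∈ I, v ∈ e := fun e he => hv e (mem_insert_of_mem he)
  refine ⟨v, fun e heJ => ?_⟩
  by_cases heI : e ∈ I
  · exact hvI e heI
  · obtain ⟨w, hw⟩ := h e (mem_sdiff.2 ⟨heJ, heI⟩)
    obtain rfl : v = w := center_unique hI hvI fun g hg => hw g (mem_insert_of_mem hg)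
    exact hw e (mem_insert_self e I)

theorem stIndep_iff_pavingIndep [Fintype V] [DecidableEq V] {X : SimpleGraph V}
    [DecidableRel X.Adj] {k : ℕ} (hk : 0 < k) {A : Finset (Sym2 V)} :
    StIndep X k A ↔ PavingIndep X.edgeSet IsStar k A := by
  rw [StIndep, PavingIndep, ← coe_subset, SimpleGraph.coe_edgeFinset, Nat.le_sub_one_iff_lt hk]

end Star

theorem stmt_3_general {V : Type*} [DecidableEq V] (E : Set (Sym2 V)) (k : ℕ) (hk : 3 ≤ k) :
    PavingIndep E IsStar k ∅ ∧
    (∀ A B : Finset (Sym2 V), PavingIndep E IsStar k B → A ⊆ B → PavingIndep E IsStar k A) ∧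
    (∀ I₁ I₂ : Finset (Sym2 V), PavingIndep E IsStar k I₁ → PavingIndep E IsStar k I₂ →
      #I₁ < #I₂ → ∃ x ∈ I₂ \ I₁, PavingIndep E IsStar k (insert x I₁)) := by
  refine ⟨.empty (by omega), fun _ _ hB hAB => hB.subset hAB,
    fun _ _ => PavingIndep.exists_insert ?_⟩
  intro I J hI hJ hJstar
  have hInontrivial : I.Nontrivial := one_lt_card_iff_nontrivial.1 (by omega)
  have hJI : ¬ J ⊆ I := fun h => absurd (card_le_card h) (by omega)
  by_contra! hstar
  exact hJstar (.of_forall_insert hInontrivial hJI hstar)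

/-- For a finite simple graph `X` and `k ≥ 3`, the family
`I = { A ⊆ E(X) : |A| ≤ k−1, or (|A| = k and A is not a star) }` is the family of
independent sets of a matroid on `E(X)`: it contains the empty set, is closed under
subsets, and satisfies the augmentation axiom. -/
theorem stmt_3 {V : Type*} [Fintype V] [DecidableEq V] (X : SimpleGraph V)
    [DecidableRel X.Adj] (k : ℕ) (hk : 3 ≤ k) :
    StIndep X k ∅ ∧
    (∀ A B : Finset (Sym2 V), StIndep X k B → A ⊆ B → StIndep X k A) ∧
    (∀ I₁ I₂ : Finset (Sym2 V), StIndep X k I₁ → StIndep X k I₂ → I₁.card < I₂.card →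
      ∃ x ∈ I₂ \ I₁, StIndep X k (insert x I₁)) := by
  simpa only [stIndep_iff_pavingIndep (show 0 < k by omega)] using stmt_3_general X.edgeSet k hk
end

section
/- Let k ≥ 3 be an integer and let X be a finite simple graph of minimum degree at least k. Then a set H ⊆ E(X) is a dependent hyperplane of the matroid St_k(X) (a hyperplane that is not an independent set) if and only if there is a vertex v of X such that H is exactly the set of all edges of X incident to v. -/
/-- The rank of a set `A` of edges in `St_k(X)`: the maximum size of an independent
subset of `A`. -/
noncomputable def stRank {V : Type*} [Fintype V] [DecidableEq V] (X : SimpleGraph V)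
    [DecidableRel X.Adj] (k : ℕ) (A : Finset (Sym2 V)) : ℕ :=
  sSup {n | ∃ B ⊆ A, StIndep X k B ∧ B.card = n}

/-- A hyperplane of `St_k(X)`: a maximal nonspanning set of edges, i.e. a set of edges
of rank strictly less than the rank of the matroid, all of whose proper supersets
(inside the edge set) have full rank. -/
def StHyperplane {V : Type*} [Fintype V] [DecidableEq V] (X : SimpleGraph V)
    [DecidableRel X.Adj] (k : ℕ) (H : Finset (Sym2 V)) : Prop :=
  H ⊆ X.edgeFinset ∧ stRank X k H < stRank X k X.edgeFinset ∧
    ∀ H' : Finset (Sym2 V), H ⊂ H' → H' ⊆ X.edgeFinset →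
      stRank X k H' = stRank X k X.edgeFinset

/-! Two distinct edges share at most one vertex, so an edge set that is not a star contains at most
three edges that already fail to be a star. As `k ≥ 3`, these extend to a `k`-element independent
subset once the set has at least `k` elements. Hence an edge set with at least `k` elements has rank
`k` if it is not a star and rank `k - 1` if it is one. Dependent sets have at least `k` elements, so
the dependent hyperplanes are the maximal stars with at least `k` edges, apart from a star that is
the whole edge set. -/

section Star

variable {V : Type*} {A B : Finset (Sym2 V)}

theorem IsStar.mono (hB : IsStar B) (hAB : A ⊆ B) : IsStar A :=
  let ⟨v, hv⟩ := hB
  ⟨v, fun e he => hv e (hAB he)⟩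

theorem eq_of_forall_mem_of_nontrivial {v w : V} (hA : A.Nontrivial) (hv : ∀ e ∈ A, v ∈ e)
    (hw : ∀ e ∈ A, w ∈ e) : v = w := by
  obtain ⟨e, he, f, hf, hef⟩ := hA
  by_contra hvw
  exact hef (Sym2.eq_of_ne_mem hvw (hv e he) (hw e he) (hv f hf) (hw f hf))

theorem exists_subset_card_le_three_not_isStar (hA : ¬ IsStar A) :
    ∃ T ⊆ A, T.card ≤ 3 ∧ ¬ IsStar T := by
  classical
  by_cases hnt : A.Nontrivial
  · obtain ⟨e, he, f, hf, hef⟩ := hnt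
    have hpair : {e, f} ⊆ A := Finset.insert_subset he (Finset.singleton_subset_iff.2 hf)
    by_cases hstar : IsStar {e, f}
    · obtain ⟨v, hv⟩ := hstar
      obtain ⟨g, hg, hvg⟩ : ∃ g ∈ A, v ∉ g := by
        by_contra! hcenter
        exact hA ⟨v, hcenter⟩
      refine ⟨{g, e, f}, Finset.insert_subset hg hpair, Finset.card_le_three, ?_⟩
      rintro ⟨w, hw⟩
      have hvw : v = w := eq_of_forall_mem_of_nontrivial (Finset.nontrivial_def.2
        ⟨e, by simp, f, by simp, hef⟩) hv fun x hx => hw x (Finset.mem_insert_of_mem hx)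
      exact hvg (hvw ▸ hw g (Finset.mem_insert_self _ _))
    · exact ⟨{e, f}, hpair, Finset.card_le_two.trans (by norm_num), hstar⟩
  · have hcard : A.card ≤ 1 := not_lt.1 (mt Finset.one_lt_card_iff_nontrivial.1 hnt)
    exact ⟨A, subset_rfl, hcard.trans (by norm_num), hA⟩

theorem exists_subset_card_eq_not_isStar {k : ℕ} (hk : 3 ≤ k) (hcard : k ≤ A.card)
    (hA : ¬ IsStar A) : ∃ B ⊆ A, B.card = k ∧ ¬ IsStar B := by
  obtain ⟨T, hTA, hT3, hT⟩ := exists_subset_card_le_three_not_isStar hA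
  obtain ⟨B, hTB, hBA, hBk⟩ := Finset.exists_subsuperset_card_eq hTA (hT3.trans hk) hcard
  exact ⟨B, hBA, hBk, fun hB => hT (hB.mono hTB)⟩

end Star

section Incidence

variable {V : Type*} [DecidableEq V] {X : SimpleGraph V}

theorem mem_of_mem_incidenceFinset {v : V} [Fintype (X.neighborSet v)] {e : Sym2 V}
    (he : e ∈ X.incidenceFinset v) : v ∈ e :=
  ((X.mem_incidenceFinset v e).1 he).2

theorem isStar_incidenceFinset (v : V) [Fintype (X.neighborSet v)] :
    IsStar (X.incidenceFinset v) :=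
  ⟨v, fun _ => mem_of_mem_incidenceFinset⟩

theorem eq_of_forall_mem_incidenceFinset {v w : V} [Fintype (X.neighborSet v)]
    (hv : 1 < X.degree v) (hw : ∀ e ∈ X.incidenceFinset v, w ∈ e) : v = w := by
  rw [← X.card_incidenceFinset_eq_degree, Finset.one_lt_card_iff_nontrivial] at hv
  exact eq_of_forall_mem_of_nontrivial hv (fun _ => mem_of_mem_incidenceFinset) hw

variable [Fintype X.edgeSet]

theorem subset_incidenceFinset_iff {v : V} [Fintype (X.neighborSet v)] {A : Finset (Sym2 V)} :
    A ⊆ X.incidenceFinset v ↔ A ⊆ X.edgeFinset ∧ ∀ e ∈ A, v ∈ e := by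
  simp only [X.incidenceFinset_eq_filter, Finset.subset_iff, Finset.mem_filter, forall_and]

theorem not_isStar_of_incidenceFinset_ssubset {v : V} [Fintype (X.neighborSet v)]
    {A : Finset (Sym2 V)} (hv : 1 < X.degree v) (hvA : X.incidenceFinset v ⊂ A)
    (hA : A ⊆ X.edgeFinset) : ¬ IsStar A := by
  rintro ⟨w, hw⟩
  obtain rfl := eq_of_forall_mem_incidenceFinset hv fun e he => hw e (hvA.subset he)
  exact hvA.not_subset (subset_incidenceFinset_iff.2 ⟨hA, hw⟩)

theorem incidenceFinset_ne_edgeFinset [X.LocallyFinite] (hd : ∀ v, 1 < X.degree v) (v : V) :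
    X.incidenceFinset v ≠ X.edgeFinset := by
  intro hv
  obtain ⟨u, hvu⟩ := (X.degree_pos_iff_exists_adj v).1 (zero_lt_one.trans (hd v))
  have huv : u = v := eq_of_forall_mem_incidenceFinset (hd u) fun e he =>
    mem_of_mem_incidenceFinset (hv ▸ X.incidenceFinset_subset u he)
  exact hvu.ne' huv

end Incidence

section Rank

variable {V : Type*} [Fintype V] [DecidableEq V] {X : SimpleGraph V} [DecidableRel X.Adj]
  {k : ℕ} {A B : Finset (Sym2 V)}

theorem StIndep.card_le (hA : StIndep X k A) : A.card ≤ k := by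
  have := hA.2
  omega

theorem IsStar.stIndep_iff (hA : IsStar A) :
    StIndep X k A ↔ A ⊆ X.edgeFinset ∧ A.card ≤ k - 1 := by
  simp only [StIndep, hA, not_true_eq_false, and_false, or_false]

theorem le_card_of_not_stIndep (hA : A ⊆ X.edgeFinset) (hdep : ¬ StIndep X k A) :
    k ≤ A.card := by
  by_contra hlt
  exact hdep ⟨hA, .inl (by omega)⟩

theorem exists_stIndep_card_eq_stRank (X : SimpleGraph V) [DecidableRel X.Adj] (k : ℕ)
    (A : Finset (Sym2 V)) : ∃ B ⊆ A, StIndep X k B ∧ B.card = stRank X k A :=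
  Nat.sSup_mem (s := {n | ∃ B ⊆ A, StIndep X k B ∧ B.card = n})
    ⟨0, ∅, Finset.empty_subset _, ⟨Finset.empty_subset _, .inl (Nat.zero_le _)⟩, rfl⟩
    ⟨k, fun _ ⟨_, _, hB, hn⟩ => hn ▸ hB.card_le⟩

theorem StIndep.card_le_stRank (hB : StIndep X k B) (hBA : B ⊆ A) : B.card ≤ stRank X k A :=
  le_csSup ⟨k, fun _ ⟨_, _, hC, hn⟩ => hn ▸ hC.card_le⟩ ⟨B, hBA, hB, rfl⟩

theorem stRank_le (X : SimpleGraph V) [DecidableRel X.Adj] (k : ℕ) (A : Finset (Sym2 V)) :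
    stRank X k A ≤ k := by
  obtain ⟨B, -, hB, hcard⟩ := exists_stIndep_card_eq_stRank X k A
  exact hcard ▸ hB.card_le

theorem sub_one_le_stRank (hA : A ⊆ X.edgeFinset) (hcard : k - 1 ≤ A.card) :
    k - 1 ≤ stRank X k A := by
  obtain ⟨B, hBA, hBk⟩ := Finset.exists_subset_card_eq hcard
  have hB : StIndep X k B := ⟨hBA.trans hA, .inl hBk.le⟩
  exact hBk ▸ hB.card_le_stRank hBA

theorem IsStar.stRank_le_sub_one (hA : IsStar A) : stRank X k A ≤ k - 1 := by
  obtain ⟨B, hBA, hB, hcard⟩ := exists_stIndep_card_eq_stRank X k A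
  exact hcard ▸ ((hA.mono hBA).stIndep_iff.1 hB).2

theorem stRank_eq_of_not_isStar (hk : 3 ≤ k) (hA : A ⊆ X.edgeFinset) (hcard : k ≤ A.card)
    (hstar : ¬ IsStar A) : stRank X k A = k := by
  obtain ⟨B, hBA, hBk, hB⟩ := exists_subset_card_eq_not_isStar hk hcard hstar
  have hindep : StIndep X k B := ⟨hBA.trans hA, .inr ⟨hBk, hB⟩⟩
  exact (stRank_le X k A).antisymm (hBk.symm.trans_le (hindep.card_le_stRank hBA))

end Rank

section Hyperplane

variable {V : Type*} [Fintype V] [DecidableEq V] {X : SimpleGraph V} [DecidableRel X.Adj]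
  {k : ℕ} {H : Finset (Sym2 V)}

theorem not_stIndep_incidenceFinset {v : V} (hk : 0 < k) (hv : k ≤ X.degree v) :
    ¬ StIndep X k (X.incidenceFinset v) := by
  rw [(isStar_incidenceFinset v).stIndep_iff, X.card_incidenceFinset_eq_degree]
  omega

theorem StHyperplane.isStar_of_le_card (hk : 3 ≤ k) (hH : StHyperplane X k H)
    (hcard : k ≤ H.card) : IsStar H := by
  by_contra hstar
  have hrank : stRank X k H = k := stRank_eq_of_not_isStar hk hH.1 hcard hstar
  exact (hrank ▸ hH.2.1).not_ge (stRank_le X k X.edgeFinset)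

theorem StHyperplane.exists_eq_incidenceFinset (hk : 3 ≤ k) (hH : StHyperplane X k H)
    (hcard : k ≤ H.card) : ∃ v, H = X.incidenceFinset v := by
  obtain ⟨v, hv⟩ := hH.isStar_of_le_card hk hcard
  obtain ⟨hHE, hlt, hmax⟩ := hH
  refine ⟨v, by_contra fun hne => ?_⟩
  have hsub : H ⊆ X.incidenceFinset v := subset_incidenceFinset_iff.2 ⟨hHE, hv⟩
  have hspan : stRank X k (X.incidenceFinset v) = stRank X k X.edgeFinset :=
    hmax _ (hsub.ssubset_of_ne hne) (X.incidenceFinset_subset v)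
  have hlower : k - 1 ≤ stRank X k H := sub_one_le_stRank hHE (by omega)
  have hupper : stRank X k (X.incidenceFinset v) ≤ k - 1 :=
    (isStar_incidenceFinset v).stRank_le_sub_one
  omega

theorem stHyperplane_incidenceFinset {v : V} (hk : 3 ≤ k) (hv : k ≤ X.degree v)
    (hne : X.incidenceFinset v ≠ X.edgeFinset) : StHyperplane X k (X.incidenceFinset v) := by
  have hsub : X.incidenceFinset v ⊆ X.edgeFinset := X.incidenceFinset_subset v
  have hspan : ∀ A, X.incidenceFinset v ⊂ A → A ⊆ X.edgeFinset → stRank X k A = k := by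
    intro A hvA hA
    refine stRank_eq_of_not_isStar hk hA ?_
      (not_isStar_of_incidenceFinset_ssubset (by omega) hvA hA)
    exact (X.card_incidenceFinset_eq_degree v ▸ hv).trans (Finset.card_le_card hvA.subset)
  have hE : stRank X k X.edgeFinset = k := hspan _ (hsub.ssubset_of_ne hne) subset_rfl
  have hrank : stRank X k (X.incidenceFinset v) ≤ k - 1 :=
    (isStar_incidenceFinset v).stRank_le_sub_one
  exact ⟨hsub, by omega, fun A hvA hA => (hspan A hvA hA).trans hE.symm⟩

end Hyperplane

theorem stmt_6_general {V : Type*} [Fintype V] [DecidableEq V] (X : SimpleGraph V)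
    [DecidableRel X.Adj] (k : ℕ) (hk : 3 ≤ k) (H : Finset (Sym2 V)) :
    (StHyperplane X k H ∧ ¬ StIndep X k H) ↔
      ∃ v : V, k ≤ X.degree v ∧ X.incidenceFinset v ≠ X.edgeFinset ∧ H = X.incidenceFinset v := by
  constructor
  · rintro ⟨hH, hdep⟩
    have hcard : k ≤ H.card := le_card_of_not_stIndep hH.1 hdep
    have hne : H ≠ X.edgeFinset := by
      rintro rfl
      exact hH.2.1.false
    obtain ⟨v, rfl⟩ := hH.exists_eq_incidenceFinset hk hcard
    exact ⟨v, X.card_incidenceFinset_eq_degree v ▸ hcard, hne, rfl⟩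
  · rintro ⟨v, hv, hne, rfl⟩
    exact ⟨stHyperplane_incidenceFinset hk hv hne, not_stIndep_incidenceFinset (by omega) hv⟩

/-- For `k ≥ 3` and a finite simple graph `X` of minimum degree at
least `k`, a set `H` of edges is a dependent hyperplane of `St_k(X)` iff there is a
vertex `v` such that `H` is exactly the set of all edges of `X` incident to `v`. -/
theorem stmt_6 {V : Type*} [Fintype V] [DecidableEq V] (X : SimpleGraph V)
    [DecidableRel X.Adj] (k : ℕ) (hk : 3 ≤ k) (hd : ∀ v, k ≤ X.degree v)
    (H : Finset (Sym2 V)) :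
    (StHyperplane X k H ∧ ¬ StIndep X k H) ↔ ∃ v : V, H = X.incidenceFinset v := by
  have hdeg : ∀ v, 1 < X.degree v := fun v => lt_of_lt_of_le (by omega) (hd v)
  simp [stmt_6_general X k hk H, hd, incidenceFinset_ne_edgeFinset hdeg]
end

section
/- Let X be a finite simple graph, let W be the cycle space of X over ZMod 2, let B be a cycle basis of X, and let π be a permutation of the edge set E(X), inducing a linear automorphism P_π of the space of functions E(X) → ZMod 2 by permuting coordinates. Then π is an automorphism of the graphic matroid of X — that is, for every set C ⊆ E(X), C is the edge set of a cycle of X if and only if π(C) is the edge set of a cycle of X — if and only if the image of B under P_π is a cycle basis of X. -/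
/-- The indicator vector (over `ZMod 2`) of the edge set of a closed walk `w`, as a
function `E(X) → ZMod 2`. -/
def cycleVec {V : Type*} [DecidableEq V] (X : SimpleGraph V) {v : V} (w : X.Walk v v) :
    X.edgeSet → ZMod 2 :=
  fun e => if (e : Sym2 V) ∈ w.edges then 1 else 0

/-- The cycle space of `X` over `ZMod 2`: the span, inside `E(X) → ZMod 2`, of the
indicator vectors of edge sets of cycles of `X`. -/
def cycleSpace {V : Type*} [DecidableEq V] (X : SimpleGraph V) :
    Submodule (ZMod 2) (X.edgeSet → ZMod 2) :=
  Submodule.span (ZMod 2) {f | ∃ (v : V) (w : X.Walk v v), w.IsCycle ∧ f = cycleVec X w}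

/-- A cycle basis of `X`: a basis of the cycle space of `X`. -/
def IsCycleBasis {V : Type*} [DecidableEq V] (X : SimpleGraph V)
    (B : Set (X.edgeSet → ZMod 2)) : Prop :=
  B ⊆ (cycleSpace X : Set (X.edgeSet → ZMod 2)) ∧
    LinearIndependent (ZMod 2) ((↑) : B → (X.edgeSet → ZMod 2)) ∧
    Submodule.span (ZMod 2) B = cycleSpace X

/-- `C` is the edge set of a cycle of `X` (as a set of elements of the edge set). -/
def IsCycleEdgeSet {V : Type*} (X : SimpleGraph V) (C : Set X.edgeSet) : Prop :=
  ∃ (v : V) (w : X.Walk v v), w.IsCycle ∧ C = {e : X.edgeSet | (e : Sym2 V) ∈ w.edges}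

/-!
Over `ZMod 2`, the edge sets of cycles are the inclusion-minimal nonempty sets whose indicator
vectors lie in the cycle space `W`. So `W` determines the cycles, just as the cycles span `W`, and
`π` preserves the cycles iff `P_π` preserves `W`. For any cycle basis `B`, the set `P_π B` is
independent and spans `P_π W`, so it is a cycle basis iff `P_π W = W`.

Minimality rests on two facts. An edge `e` in the support of `g ∈ W` lies on a cycle inside that
support: otherwise deleting `e` from the support would separate its ends, giving a cut that meets
the support only in `e`, whereas `W` is orthogonal to every cut. And no cycle properly contains
another, because all degrees in a cycle are two and cycles are connected.
-/

section BinaryCircuit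

variable {E F : Type*}

/-- The circuits of the binary matroid on `E` whose cycle space is `W`: vectors over `ZMod 2` are
identified with their supports, so a circuit is a minimal nonempty set with indicator in `W`. -/
def IsBinaryCircuit (W : Submodule (ZMod 2) (E → ZMod 2)) : Set E → Prop :=
  Minimal fun C ↦ C.Nonempty ∧ C.indicator 1 ∈ W

theorem funLeft_indicator_image (R : Type*) [Semiring R] (π : E ≃ F) (C : Set E) :
    LinearMap.funLeft R R π ((π '' C).indicator 1) = C.indicator 1 := by
  classical
  funext e
  simp [LinearMap.funLeft_apply, Set.indicator_apply]

theorem indicator_mem_map_funLeft_iff {R : Type*} [Semiring R] (π : E ≃ F)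
    (W : Submodule R (F → R)) (C : Set E) :
    C.indicator 1 ∈ W.map (LinearMap.funLeft R R π) ↔ (π '' C).indicator 1 ∈ W := by
  rw [← funLeft_indicator_image R π C]
  exact (LinearMap.funLeft_injective_of_surjective R R π π.surjective).mem_set_image

theorem isBinaryCircuit_map_funLeft_iff (π : E ≃ F) (W : Submodule (ZMod 2) (F → ZMod 2))
    (C : Set E) :
    IsBinaryCircuit (W.map (LinearMap.funLeft (ZMod 2) (ZMod 2) π)) C ↔
      IsBinaryCircuit W (π '' C) := by
  have h : Minimal (fun D ↦ D.Nonempty ∧ D.indicator 1 ∈ W) (π '' C) ↔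
      Minimal (fun C ↦ (π '' C).Nonempty ∧ (π '' C).indicator 1 ∈ W) C :=
    π.toOrderIsoSet.toOrderEmbedding.minimal_apply_mem_iff
      (t := {D | D.Nonempty ∧ D.indicator 1 ∈ W}) fun D _ ↦ π.toOrderIsoSet.surjective D
  simp only [IsBinaryCircuit, indicator_mem_map_funLeft_iff, h, Set.image_nonempty]

theorem map_funLeft_span_indicator (R : Type*) [Semiring R] (π : E ≃ F) (𝒞 : Set (Set F)) :
    (Submodule.span R ((fun C ↦ C.indicator 1) '' 𝒞)).map (LinearMap.funLeft R R π) =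
      Submodule.span R ((fun C ↦ C.indicator 1) '' ((π '' ·) ⁻¹' 𝒞)) := by
  have h𝒞 : 𝒞 = (π '' ·) '' ((π '' ·) ⁻¹' 𝒞) :=
    (Set.image_preimage_eq 𝒞 π.surjective.image_surjective).symm
  conv_lhs => rw [h𝒞]
  simp only [Submodule.map_span, Set.image_image, funLeft_indicator_image]

end BinaryCircuit

section Cut

variable {V : Type*}

/-- The coboundary of a vertex labelling over `ZMod 2`. When `σ` is the indicator of a vertex set
`S`, it is the indicator of the cut between `S` and its complement. -/
def coboundary (σ : V → ZMod 2) : Sym2 V → ZMod 2 :=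
  Sym2.lift ⟨fun u v ↦ σ u + σ v, fun _ _ ↦ add_comm _ _⟩

theorem coboundary_mk (σ : V → ZMod 2) (u v : V) : coboundary σ s(u, v) = σ u + σ v := rfl

theorem sum_coboundary_edges {X : SimpleGraph V} (σ : V → ZMod 2) {u v : V} (w : X.Walk u v) :
    (w.edges.map (coboundary σ)).sum = σ u + σ v := by
  induction w with
  | nil => simp [CharTwo.add_self_eq_zero]
  | @cons a b c h p ih =>
    rw [SimpleGraph.Walk.edges_cons, List.map_cons, List.sum_cons, ih, coboundary_mk]
    linear_combination CharTwo.add_self_eq_zero (σ b)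

end Cut

section Graph

variable {V : Type*} {X : SimpleGraph V}

section CycleSpace

variable [DecidableEq V]

theorem cycleVec_mem_cycleSpace {v : V} {w : X.Walk v v} (hw : w.IsCycle) :
    cycleVec X w ∈ cycleSpace X :=
  Submodule.subset_span ⟨v, w, hw, rfl⟩

theorem indicator_edges_eq_cycleVec {v : V} (w : X.Walk v v) :
    {e : X.edgeSet | (e : Sym2 V) ∈ w.edges}.indicator 1 = cycleVec X w := by
  funext e
  simp [cycleVec, Set.indicator_apply]

theorem cycleSpace_eq_span_indicator :
    cycleSpace X =
      Submodule.span (ZMod 2) ((fun C ↦ C.indicator 1) '' {C | IsCycleEdgeSet X C}) := by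
  unfold cycleSpace
  congr 1
  ext f
  constructor
  · rintro ⟨v, w, hw, rfl⟩
    exact ⟨_, ⟨v, w, hw, rfl⟩, indicator_edges_eq_cycleVec w⟩
  · rintro ⟨_, ⟨v, w, hw, rfl⟩, rfl⟩
    exact ⟨v, w, hw, indicator_edges_eq_cycleVec w⟩

theorem hasFiniteSupport_cycleVec {v : V} (w : X.Walk v v) : (cycleVec X w).HasFiniteSupport :=
  (w.edges.finite_toSet.preimage Subtype.val_injective.injOn).subset fun e he ↦ by
    simpa [cycleVec] using he

theorem hasFiniteSupport_of_mem_cycleSpace {g : X.edgeSet → ZMod 2} (hg : g ∈ cycleSpace X) :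
    g.HasFiniteSupport := by
  induction hg using Submodule.span_induction with
  | mem _ h => obtain ⟨v, w, -, rfl⟩ := h; exact hasFiniteSupport_cycleVec w
  | zero => exact Function.hasFiniteSupport_zero
  | add _ _ _ _ hx hy => exact hx.add hy
  | smul a _ _ hx => exact hx.smul_right _

theorem finsum_cycleVec_mul (c : Sym2 V → ZMod 2) {v : V} {w : X.Walk v v} (hw : w.IsTrail) :
    ∑ᶠ e, cycleVec X w e * c e = (w.edges.map c).sum := by
  classical
  rw [← List.sum_toFinset _ hw.edges_nodup, ← Finset.sum_subtype_of_mem (p := (· ∈ X.edgeSet)) c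
    fun e he ↦ w.edges_subset_edgeSet (List.mem_toFinset.1 he)]
  rw [finsum_eq_sum_of_support_subset (s := w.edges.toFinset.subtype (· ∈ X.edgeSet))]
  · refine Finset.sum_congr rfl fun e he ↦ ?_
    have he' : (e : Sym2 V) ∈ w.edges := by simpa using he
    simp [cycleVec, he']
  · intro e he
    by_contra he'
    simp_all [cycleVec]

theorem finsum_mul_coboundary_eq_zero {g : X.edgeSet → ZMod 2} (hg : g ∈ cycleSpace X)
    (σ : V → ZMod 2) : ∑ᶠ e, g e * coboundary σ e = 0 := by
  induction hg using Submodule.span_induction with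
  | mem _ h =>
    obtain ⟨v, w, hw, rfl⟩ := h
    rw [finsum_cycleVec_mul _ hw.isTrail, sum_coboundary_edges, CharTwo.add_self_eq_zero]
  | zero => simp
  | add g₁ g₂ h₁ h₂ ih₁ ih₂ =>
    have hfin₁ : Function.HasFiniteSupport fun e ↦ g₁ e * coboundary σ e :=
      (hasFiniteSupport_of_mem_cycleSpace h₁).mul_left _
    have hfin₂ : Function.HasFiniteSupport fun e ↦ g₂ e * coboundary σ e :=
      (hasFiniteSupport_of_mem_cycleSpace h₂).mul_left _
    calc ∑ᶠ e, (g₁ + g₂) e * coboundary σ e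
        = ∑ᶠ e, (g₁ e * coboundary σ e + g₂ e * coboundary σ e) := by
          simp only [Pi.add_apply, add_mul]
      _ = 0 := by rw [finsum_add_distrib hfin₁ hfin₂, ih₁, ih₂, add_zero]
  | smul a g _ ih =>
    simp only [Pi.smul_apply, smul_mul_assoc, ← smul_finsum, ih, smul_zero]

end CycleSpace

/-- The spanning subgraph of `X` whose edges are the support of the edge vector `g`. -/
def supportGraph (g : X.edgeSet → ZMod 2) : SimpleGraph V :=
  SimpleGraph.fromEdgeSet (Subtype.val '' Function.support g)

theorem mem_edgeSet_supportGraph {g : X.edgeSet → ZMod 2} {e : X.edgeSet} :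
    (e : Sym2 V) ∈ (supportGraph g).edgeSet ↔ g e ≠ 0 := by
  simp [supportGraph, X.not_isDiag_of_mem_edgeSet e.2]

theorem supportGraph_le (g : X.edgeSet → ZMod 2) : supportGraph g ≤ X := by
  rintro u v huv
  obtain ⟨⟨e, -, he⟩, -⟩ := (SimpleGraph.fromEdgeSet_adj _).1 huv
  exact X.mem_edgeSet.1 (he ▸ e.2)

theorem not_isBridge_supportGraph [DecidableEq V] {g : X.edgeSet → ZMod 2}
    (hg : g ∈ cycleSpace X) {e : X.edgeSet} (he : g e ≠ 0) :
    ¬ (supportGraph g).IsBridge e := by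
  classical
  obtain ⟨⟨x, y⟩, hxy⟩ := e
  intro hbridge
  set H := (supportGraph g).deleteEdges {s(x, y)} with hH
  set σ : V → ZMod 2 := {z | H.Reachable x z}.indicator 1 with hσ
  have cut_edge : coboundary σ s(x, y) = 1 := by
    have hy : ¬ H.Reachable x y := SimpleGraph.isBridge_iff.1 hbridge
    simp [coboundary_mk, hσ, hy]
  have cut_other : ∀ e' : X.edgeSet, e' ≠ ⟨s(x, y), hxy⟩ → g e' * coboundary σ e' = 0 := by
    rintro ⟨⟨a, b⟩, hab⟩ hne
    rw [mul_eq_zero, or_iff_not_imp_left]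
    intro hgab
    have hadj : H.Adj a b := by
      rw [hH, SimpleGraph.deleteEdges_adj]
      exact ⟨mem_edgeSet_supportGraph.2 hgab, fun h ↦ hne (Subtype.ext h)⟩
    have hreach : H.Reachable x a ↔ H.Reachable x b :=
      ⟨fun h ↦ h.trans hadj.reachable, fun h ↦ h.trans hadj.symm.reachable⟩
    change coboundary σ s(a, b) = 0
    simp [coboundary_mk, hσ, Set.indicator_apply, hreach, CharTwo.add_self_eq_zero]
  have horth := finsum_mul_coboundary_eq_zero hg σ
  rw [finsum_eq_single _ _ cut_other, cut_edge, mul_one] at horth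
  exact he horth

theorem exists_isCycleEdgeSet_subset_support [DecidableEq V] {g : X.edgeSet → ZMod 2}
    (hg : g ∈ cycleSpace X) {e : X.edgeSet} (he : g e ≠ 0) :
    ∃ C, IsCycleEdgeSet X C ∧ e ∈ C ∧ C ⊆ Function.support g := by
  have hbridge := not_isBridge_supportGraph hg he
  rw [SimpleGraph.isBridge_iff_forall_cycle_notMem (mem_edgeSet_supportGraph.2 he)] at hbridge
  push Not at hbridge
  obtain ⟨v, w, hw, hew⟩ := hbridge
  refine ⟨_, ⟨v, w.mapLe (supportGraph_le g), hw.mapLe _, rfl⟩, ?_, fun e' he' ↦ ?_⟩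
  · simpa using hew
  · exact mem_edgeSet_supportGraph.1 (w.edges_subset_edgeSet (by simpa using he'))

section CycleInclusion

variable {u v : V} {p : X.Walk u u} {q : X.Walk v v}

theorem edgeSet_subset_of_forall_neighborSet_subset {H K : X.Subgraph}
    (h : ∀ a ∈ H.verts, K.neighborSet a ⊆ H.neighborSet a) (r : X.Walk u v) (hu : u ∈ H.verts)
    (hr : r.edgeSet ⊆ K.edgeSet) : r.edgeSet ⊆ H.edgeSet := by
  induction r with
  | nil => simp
  | @cons a b c hab r ih =>
    rw [SimpleGraph.Walk.edgeSet_cons, Set.insert_subset_iff] at hr ⊢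
    have hadj : H.Adj a b := h a hu hr.1
    exact ⟨hadj, ih hadj.snd_mem hr.2⟩

theorem neighborSet_toSubgraph_eq_of_le (hp : p.IsCycle) (hq : q.IsCycle)
    (h : q.toSubgraph ≤ p.toSubgraph) {a : V} (ha : a ∈ q.toSubgraph.verts) :
    q.toSubgraph.neighborSet a = p.toSubgraph.neighborSet a := by
  refine Set.eq_of_subset_of_ncard_le (SimpleGraph.Subgraph.neighborSet_subset_of_subgraph h a) ?_
    p.finite_neighborSet_toSubgraph
  rw [hp.ncard_neighborSet_toSubgraph_eq_two (p.mem_verts_toSubgraph.1 (h.1 ha)),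
    hq.ncard_neighborSet_toSubgraph_eq_two (q.mem_verts_toSubgraph.1 ha)]

theorem edgeSet_subset_of_toSubgraph_le (hp : p.IsCycle) (hq : q.IsCycle)
    (h : q.toSubgraph ≤ p.toSubgraph) : p.edgeSet ⊆ q.edgeSet := by
  classical
  have hvq : v ∈ q.toSubgraph.verts := q.start_mem_verts_toSubgraph
  have hvp : v ∈ p.support := p.mem_verts_toSubgraph.1 (h.1 hvq)
  have hrotate : (p.rotate v hvp).edgeSet = p.edgeSet :=
    Set.ext fun e ↦ (p.rotate_edges v hvp).mem_iff
  rw [← hrotate, ← q.edgeSet_toSubgraph]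
  refine edgeSet_subset_of_forall_neighborSet_subset (K := p.toSubgraph)
    (fun a ha ↦ (neighborSet_toSubgraph_eq_of_le hp hq h ha).ge) _ hvq ?_
  rw [hrotate, p.edgeSet_toSubgraph]

end CycleInclusion

namespace IsCycleEdgeSet

variable {C D : Set X.edgeSet}

theorem nonempty (hC : IsCycleEdgeSet X C) : C.Nonempty := by
  obtain ⟨v, w, hw, rfl⟩ := hC
  obtain ⟨e, he⟩ := List.exists_mem_of_ne_nil _ (mt SimpleGraph.Walk.edges_eq_nil.1 hw.not_nil)
  exact ⟨⟨e, w.edges_subset_edgeSet he⟩, he⟩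

theorem indicator_mem_cycleSpace [DecidableEq V] (hC : IsCycleEdgeSet X C) :
    C.indicator 1 ∈ cycleSpace X := by
  obtain ⟨v, w, hw, rfl⟩ := hC
  exact indicator_edges_eq_cycleVec w ▸ cycleVec_mem_cycleSpace hw

theorem subset_of_subset (hC : IsCycleEdgeSet X C) (hD : IsCycleEdgeSet X D) (h : D ⊆ C) :
    C ⊆ D := by
  obtain ⟨u, p, hp, rfl⟩ := hC
  obtain ⟨v, q, hq, rfl⟩ := hD
  have hqp : q.toSubgraph ≤ p.toSubgraph := by
    rw [SimpleGraph.Walk.toSubgraph_le_iff hq.not_nil, p.edgeSet_toSubgraph]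
    exact fun e he ↦ h (a := ⟨e, q.edges_subset_edgeSet he⟩) he
  exact fun e he ↦ edgeSet_subset_of_toSubgraph_le hp hq hqp he

end IsCycleEdgeSet

variable [DecidableEq V]

theorem isCycleEdgeSet_iff_isBinaryCircuit {C : Set X.edgeSet} :
    IsCycleEdgeSet X C ↔ IsBinaryCircuit (cycleSpace X) C := by
  have exists_cycle_subset : ∀ D : Set X.edgeSet, D.Nonempty → D.indicator 1 ∈ cycleSpace X →
      ∃ C', IsCycleEdgeSet X C' ∧ C' ⊆ D := by
    rintro D ⟨e, he⟩ hD
    obtain ⟨C', hC', -, hsub⟩ := exists_isCycleEdgeSet_subset_support hD (e := e) (by simp [he])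
    exact ⟨C', hC', hsub.trans Set.support_indicator_subset⟩
  constructor
  · intro hC
    refine ⟨⟨hC.nonempty, hC.indicator_mem_cycleSpace⟩, fun D ⟨hne, hD⟩ hDC ↦ ?_⟩
    obtain ⟨C', hC', hC'D⟩ := exists_cycle_subset D hne hD
    exact (hC.subset_of_subset hC' (hC'D.trans hDC)).trans hC'D
  · intro hC
    obtain ⟨C', hC', hC'C⟩ := exists_cycle_subset C hC.prop.1 hC.prop.2
    have : C' = C := hC.eq_of_subset ⟨hC'.nonempty, hC'.indicator_mem_cycleSpace⟩ hC'C
    exact this ▸ hC'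

theorem forall_isCycleEdgeSet_image_iff (π : Equiv.Perm X.edgeSet) :
    (∀ C : Set X.edgeSet, IsCycleEdgeSet X C ↔ IsCycleEdgeSet X (π '' C)) ↔
      (cycleSpace X).map (LinearMap.funLeft (ZMod 2) (ZMod 2) π) = cycleSpace X := by
  constructor
  · intro h
    have hpreimage : (π '' ·) ⁻¹' {C | IsCycleEdgeSet X C} = {C | IsCycleEdgeSet X C} :=
      Set.ext fun C ↦ (h C).symm
    rw [cycleSpace_eq_span_indicator, map_funLeft_span_indicator, hpreimage]
  · intro h C
    rw [isCycleEdgeSet_iff_isBinaryCircuit, isCycleEdgeSet_iff_isBinaryCircuit,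
      ← isBinaryCircuit_map_funLeft_iff, h]

theorem IsCycleBasis.image_iff {B : Set (X.edgeSet → ZMod 2)} (hB : IsCycleBasis X B)
    {T : (X.edgeSet → ZMod 2) →ₗ[ZMod 2] X.edgeSet → ZMod 2} (hT : Function.Injective T) :
    IsCycleBasis X (T '' B) ↔ (cycleSpace X).map T = cycleSpace X := by
  obtain ⟨-, hindep, hspan⟩ := hB
  rw [← hspan, ← Submodule.span_image, hspan]
  refine ⟨fun h ↦ h.2.2, fun h ↦ ⟨h ▸ Submodule.subset_span, ?_, h⟩⟩
  exact LinearIndepOn.id_image (hindep.map_injOn T hT.injOn)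

end Graph

theorem stmt_8_general {V : Type*} [DecidableEq V] (X : SimpleGraph V)
    (π : Equiv.Perm X.edgeSet) (B : Set (X.edgeSet → ZMod 2)) (hB : IsCycleBasis X B) :
    (∀ C : Set X.edgeSet, IsCycleEdgeSet X C ↔ IsCycleEdgeSet X (π '' C)) ↔
      IsCycleBasis X (LinearMap.funLeft (ZMod 2) (ZMod 2) π '' B) := by
  rw [hB.image_iff (LinearMap.funLeft_injective_of_surjective _ _ _ π.surjective)]
  exact forall_isCycleEdgeSet_image_iff π

/-- Let `X` be a finite simple graph, `B` a cycle basis of `X`, and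
`π` a permutation of `E(X)` inducing the coordinate-permuting linear automorphism
`P_π` of `E(X) → ZMod 2`.  Then `π` is an automorphism of the graphic matroid of `X`
(it maps edge sets of cycles to edge sets of cycles in both directions) iff the image
of `B` under `P_π` is a cycle basis of `X`. -/
theorem stmt_8 {V : Type*} [Fintype V] [DecidableEq V] (X : SimpleGraph V)
    (π : Equiv.Perm X.edgeSet) (B : Set (X.edgeSet → ZMod 2)) (hB : IsCycleBasis X B) :
    (∀ C : Set X.edgeSet, IsCycleEdgeSet X C ↔ IsCycleEdgeSet X (π '' C)) ↔
      IsCycleBasis X (LinearMap.funLeft (ZMod 2) (ZMod 2) π '' B) :=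
  stmt_8_general X π B hB
end

section
/- Let F be a field, m ≥ 1, m′ ≥ m, and let e₁, …, e_m ∈ F^m with e₁ ≠ 0. Working in F^m × F^{m′}, define f_i = (e_i, 0) for 1 ≤ i ≤ m, and for 1 ≤ j ≤ m′ define g_j = (u_j, d_j), where u_j = (e₁)_j · δ_j ∈ F^m for j ≤ m (δ_j the j-th standard basis vector) and u_j = 0 for j > m, and d₁, …, d_{m′} ∈ F^{m′} are the cyclic difference vectors. Then for all distinct indices i₂, …, i_k ∈ {2, …, m}: the set {e₁, e_{i₂}, …, e_{i_k}} is minimally linearly dependent if and only if both {f₁, f_{i₂}, …, f_{i_k}} is minimally linearly dependent and {f_{i₂}, …, f_{i_k}, g₁, …, g_{m′}} is minimally linearly dependent. -/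
/-- A family of vectors is minimally linearly dependent (a circuit): it is linearly
dependent but every proper subfamily is linearly independent. -/
def MinLinearDep (F : Type*) [Field F] {ι V : Type*} [AddCommGroup V] [Module F V]
    (v : ι → V) : Prop :=
  ¬ LinearIndependent F v ∧
    ∀ S : Set ι, S ≠ Set.univ → LinearIndependent F (fun s : S => v s.1)

/-!
The linear relations among the cyclic difference vectors are exactly the constant ones. Hence a
relation among the `(w t, 0)` and `(u j, d j)` gives every `(u j, d j)` the same coefficient, so it
is a relation among the `w t` and `∑ j, u j` with the coefficient of `∑ j, u j` repeated. Repeating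
coefficients affects neither being nonzero nor having full support, and a family is a circuit when
it has a nonzero relation and every nonzero relation has full support.
-/

/-- The cyclic difference vector `d_j = δ_j - δ_{j-1}` of `R^n`, with indices modulo `n`; it is `0`
when `n = 1`. -/
def cyclicDiff (R : Type*) [Ring R] {n : ℕ} [NeZero n] (j : Fin n) : Fin n → R :=
  Pi.single j 1 - Pi.single (j - 1) 1

section CyclicDiff

variable {R : Type*} [Ring R] {n : ℕ} [NeZero n]

theorem cyclicDiff_apply_of_one_lt (hn : 1 < n) (j i : Fin n) :
    cyclicDiff R j i = if i = j then 1 else if i = j - 1 then -1 else 0 := by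
  have : Nontrivial (Fin n) := Fin.nontrivial_iff_two_le.2 hn
  have hj : j - 1 ≠ j := by simp [hn.ne']
  simp only [cyclicDiff, Pi.sub_apply, Pi.single_apply]
  split_ifs <;> simp_all

theorem sum_smul_cyclicDiff_apply (b : Fin n → R) (i : Fin n) :
    (∑ j, b j • cyclicDiff R j) i = b i - b (i + 1) := by
  simp [cyclicDiff, Pi.single_apply, mul_sub, eq_sub_iff_add_eq]

theorem sum_smul_cyclicDiff_eq_zero_iff (b : Fin n → R) :
    ∑ j, b j • cyclicDiff R j = 0 ↔ ∃ k, Function.const (Fin n) k = b := by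
  simp only [funext_iff, sum_smul_cyclicDiff_apply, Pi.zero_apply, sub_eq_zero,
    Function.const_apply]
  refine ⟨fun hshift ↦ ⟨b 0, fun j ↦ ?_⟩, fun ⟨k, hk⟩ i ↦ (hk i).symm.trans (hk (i + 1))⟩
  have hperiodic : Function.Periodic b 1 := fun i ↦ (hshift i).symm
  have hj_nsmul : (j : ℕ) • (1 : Fin n) = j := by
    open Fin.CommRing in rw [nsmul_one, Fin.cast_val_eq_self]
  rw [← hj_nsmul, hperiodic.nsmul_eq]

end CyclicDiff

theorem sum_ite_val_eq {M : Type*} [AddCommMonoid M] {m n : ℕ} (hmn : m ≤ n) (x : Fin m → M) :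
    ∑ j : Fin n, (fun i : Fin m ↦ if (i : ℕ) = j then x i else 0) = x := by
  funext i
  have hcast (j : Fin n) : (i : ℕ) = j ↔ Fin.castLE hmn i = j := by simp [Fin.ext_iff]
  simp [hcast]

theorem sum_smul_sumElim_eq_zero_iff {R V W ι J : Type*} [Semiring R] [AddCommMonoid V]
    [Module R V] [AddCommMonoid W] [Module R W] [Fintype ι] [Fintype J]
    {a : V} {u : J → V} (hu : ∑ j, u j = a) {d : J → W}
    (hd : ∀ b : J → R, ∑ j, b j • d j = 0 ↔ ∃ k, Function.const J k = b) (w : ι → V)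
    (c : ι ⊕ J → R) :
    ∑ x, c x • Sum.elim (fun t ↦ (w t, (0 : W))) (fun j ↦ (u j, d j)) x = 0 ↔
      ∃ b : Option ι → R, ∑ o, b o • o.elim a w = 0 ∧
        b ∘ Sum.elim some (fun _ ↦ none) = c := by
  have hsplit : ∑ x, c x • Sum.elim (fun t ↦ (w t, (0 : W))) (fun j ↦ (u j, d j)) x = 0 ↔
      ∑ t, c (.inl t) • w t + ∑ j, c (.inr j) • u j = 0 ∧ ∑ j, c (.inr j) • d j = 0 := by
    simp [Prod.ext_iff, Prod.fst_sum, Prod.snd_sum]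
  have hfactor : (∃ k, Function.const J k = fun j ↦ c (.inr j)) ↔
      ∃ b : Option ι → R, b ∘ Sum.elim some (fun _ ↦ none) = c := by
    constructor
    · rintro ⟨k, hk⟩
      exact ⟨fun o ↦ o.elim k (c ∘ .inl), funext (Sum.rec (fun _ ↦ rfl) (congrFun hk))⟩
    · rintro ⟨b, rfl⟩
      exact ⟨b none, rfl⟩
  have hsum (b : Option ι → R) : ∑ o, b o • o.elim a w =
      ∑ t, b (some t) • w t + ∑ j, b none • u j := by
    rw [Fintype.sum_option, ← Finset.smul_sum, hu, add_comm]
    rfl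
  rw [hsplit, hd, hfactor]
  constructor
  · rintro ⟨hrel, b, rfl⟩
    exact ⟨b, (hsum b).trans hrel, rfl⟩
  · rintro ⟨b, hb, rfl⟩
    exact ⟨(hsum b).symm.trans hb, b, rfl⟩

section Circuit

variable {F V W : Type*} [Field F] [AddCommGroup V] [Module F V] [AddCommGroup W] [Module F W]

namespace MinLinearDep

theorem not_of_infinite {ι : Type*} [Infinite ι] {v : ι → V} : ¬ MinLinearDep F v := fun hv ↦
  hv.1 <| linearIndependent_iff_finset_linearIndependent.2 fun s ↦ hv.2 s fun hs ↦
    s.finite_toSet.infinite_compl.nonempty.ne_empty (by rw [hs, Set.compl_univ])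

theorem iff_exists_and_forall_ne_zero {ι : Type*} [Fintype ι] {v : ι → V} :
    MinLinearDep F v ↔ (∃ c : ι → F, ∑ i, c i • v i = 0 ∧ c ≠ 0) ∧
      ∀ c : ι → F, ∑ i, c i • v i = 0 → c ≠ 0 → ∀ i, c i ≠ 0 := by
  classical
  refine and_congr ?_ ⟨fun hproper c hc hc0 i hi ↦ hc0 ?_, fun hfull S hS ↦ ?_⟩
  · simp only [Fintype.linearIndependent_iff, not_forall, exists_prop, Function.ne_iff,
      Pi.zero_apply]
  · have hindep : LinearIndepOn F v (Finset.univ.erase i : Finset ι) :=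
      hproper _ fun h ↦ Finset.notMem_erase i Finset.univ (Finset.mem_coe.1 (h ▸ Set.mem_univ i))
    have hsum : ∑ j ∈ Finset.univ.erase i, c j • v j = 0 := by
      rwa [Finset.sum_erase _ (by rw [hi, zero_smul])]
    funext j
    obtain rfl | hj := eq_or_ne j i
    · exact hi
    · exact linearIndepOn_finset_iff.1 hindep c hsum j (by simpa using hj)
  · obtain ⟨i, hi⟩ := (Set.ne_univ_iff_exists_notMem S).1 hS
    suffices LinearIndepOn F v (Finset.univ.erase i : Finset ι) from
      this.mono fun j hj ↦ by simpa using ne_of_mem_of_not_mem hj hi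
    refine linearIndepOn_finset_iff.2 fun c hc j hj ↦ ?_
    have hsum : ∑ k, Function.update c i 0 k • v k = 0 := by
      rw [← Finset.add_sum_erase _ _ (Finset.mem_univ i), Function.update_self, zero_smul,
        zero_add, ← hc]
      exact Finset.sum_congr rfl fun k hk ↦ by
        rw [Function.update_of_ne (Finset.ne_of_mem_erase hk)]
    by_contra hcj
    refine hfull _ hsum (Function.ne_iff.2 ⟨j, ?_⟩) i (Function.update_self ..)
    rwa [Function.update_of_ne (Finset.ne_of_mem_erase hj)]

theorem comp_iff_of_injective {ι : Type*} {v : ι → V} {f : V →ₗ[F] W}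
    (hf : Function.Injective f) : MinLinearDep F (f ∘ v) ↔ MinLinearDep F v :=
  and_congr (not_congr (f.linearIndependent_iff_of_injOn hf.injOn))
    (forall₂_congr fun _ _ ↦ f.linearIndependent_iff_of_injOn hf.injOn)

theorem iff_of_relations_eq_comp {α β : Type*} [Fintype α] [Fintype β] {v : α → V} {w : β → W}
    {π : α → β} (hπ : Function.Surjective π)
    (h : ∀ c : α → F, ∑ a, c a • v a = 0 ↔ ∃ b : β → F, ∑ i, b i • w i = 0 ∧ b ∘ π = c) :
    MinLinearDep F v ↔ MinLinearDep F w := by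
  have hne (b : β → F) : b ∘ π ≠ 0 ↔ b ≠ 0 := hπ.injective_comp_right.ne_iff' rfl
  simp only [iff_exists_and_forall_ne_zero, h]
  constructor
  · rintro ⟨⟨_, ⟨b, hb, rfl⟩, hb0⟩, hfull⟩
    exact ⟨⟨b, hb, (hne b).1 hb0⟩, fun b' hb' hb'0 ↦
      hπ.forall.2 (hfull _ ⟨b', hb', rfl⟩ ((hne b').2 hb'0))⟩
  · rintro ⟨⟨b, hb, hb0⟩, hfull⟩
    refine ⟨⟨_, ⟨b, hb, rfl⟩, (hne b).2 hb0⟩, ?_⟩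
    rintro _ ⟨b', hb', rfl⟩ hb'0 a
    exact hfull b' hb' ((hne b').1 hb'0) (π a)

theorem optionElim_prodMk_zero_iff {ι : Type*} (a : V) (w : ι → V) :
    MinLinearDep F (fun o : Option ι ↦ o.elim (a, (0 : W)) (fun t ↦ (w t, 0))) ↔
      MinLinearDep F (fun o : Option ι ↦ o.elim a w) := by
  rw [← comp_iff_of_injective (LinearMap.inl_injective (R := F) (M := V) (M₂ := W))]
  congr! 1
  funext o
  cases o <;> rfl

theorem sumElim_iff_optionElim {ι J : Type*} [Fintype J] [Nonempty J]
    {a : V} {u : J → V} (hu : ∑ j, u j = a) {d : J → W}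
    (hd : ∀ b : J → F, ∑ j, b j • d j = 0 ↔ ∃ k, Function.const J k = b) (w : ι → V) :
    MinLinearDep F (Sum.elim (fun t ↦ (w t, (0 : W))) (fun j ↦ (u j, d j))) ↔
      MinLinearDep F (fun o : Option ι ↦ o.elim a w) := by
  obtain _ | _ := finite_or_infinite ι
  · have := Fintype.ofFinite ι
    have hsurj : Function.Surjective (Sum.elim some fun _ ↦ none : ι ⊕ J → Option ι)
      | none => ⟨.inr (Classical.arbitrary J), rfl⟩
      | some t => ⟨.inl t, rfl⟩
    exact iff_of_relations_eq_comp hsurj (sum_smul_sumElim_eq_zero_iff hu hd w)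
  · exact iff_of_false not_of_infinite not_of_infinite

end MinLinearDep

theorem stmt_12_general {ι : Type*} {n : ℕ} [NeZero n] {a : V} (w : ι → V)
    {u : Fin n → V} (hu : ∑ j, u j = a) :
    MinLinearDep F (fun o : Option ι ↦ o.elim a w) ↔
      MinLinearDep F (fun o : Option ι ↦ o.elim (a, (0 : Fin n → F)) (fun t ↦ (w t, 0))) ∧
        MinLinearDep F (Sum.elim (fun t ↦ (w t, (0 : Fin n → F)))
          (fun j ↦ (u j, cyclicDiff F j))) := by
  rw [MinLinearDep.optionElim_prodMk_zero_iff,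
    MinLinearDep.sumElim_iff_optionElim hu sum_smul_cyclicDiff_eq_zero_iff, and_self_iff]

end Circuit

/-- Let `F` be a field, `1 ≤ m ≤ m'`, and `e₁, …, e_m ∈ F^m` with
`e₁ ≠ 0`.  In `F^m × F^{m'}` set `fᵢ = (eᵢ, 0)` and `g j = (u j, d j)`, where
`u j = (e₁)_j • δ_j` for `j ≤ m` and `u j = 0` for `j > m`, and `d₁, …, d_{m'}` are the
cyclic difference vectors of `F^{m'}`.  Then for all distinct indices
`i₂, …, i_k ∈ {2, …, m}`: the family `{e₁, e_{i₂}, …, e_{i_k}}` is minimally linearly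
dependent iff both `{f₁, f_{i₂}, …, f_{i_k}}` and
`{f_{i₂}, …, f_{i_k}, g₁, …, g_{m'}}` are minimally linearly dependent. -/
theorem stmt_12 {F : Type*} [Field F] (m m' : ℕ) [NeZero m] [NeZero m'] (hm : 1 ≤ m)
    (hmm' : m ≤ m') (e : Fin m → (Fin m → F)) (he : e 0 ≠ 0)
    (d : Fin m' → (Fin m' → F))
    (hd : ∀ j i : Fin m', d j i = if i = j then 1 else if i = j - 1 then -1 else 0)
    (u : Fin m' → (Fin m → F))
    (hu : ∀ (j : Fin m') (i : Fin m), u j i = if (i : ℕ) = (j : ℕ) then e 0 i else 0)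
    (fvec : Fin m → (Fin m → F) × (Fin m' → F)) (hf : ∀ i, fvec i = (e i, 0))
    (g : Fin m' → (Fin m → F) × (Fin m' → F)) (hg : ∀ j, g j = (u j, d j))
    (r : ℕ) (idx : Fin r → Fin m) (hinj : Function.Injective idx)
    (hne : ∀ t, idx t ≠ 0) :
    MinLinearDep F (fun o : Option (Fin r) => o.elim (e 0) (fun t => e (idx t))) ↔
      (MinLinearDep F (fun o : Option (Fin r) => o.elim (fvec 0) (fun t => fvec (idx t))) ∧
        MinLinearDep F (Sum.elim (fun t : Fin r => fvec (idx t)) g)) := by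
  obtain rfl : fvec = fun i ↦ (e i, 0) := funext hf
  obtain rfl : g = fun j ↦ (u j, d j) := funext hg
  obtain hm' | hm' := (hm.trans hmm').eq_or_lt
  · -- For `m' = 1` the formula `hd` reads `d₁ = 1` rather than `d₁ = δ₁ - δ₁ = 0`.
    have : Subsingleton (Fin m) := Fin.subsingleton_iff_le_one.2 (hmm'.trans hm'.ge)
    have : IsEmpty (Fin r) := ⟨fun t ↦ hne t (Subsingleton.elim _ _)⟩
    have hdep : ¬ MinLinearDep F (fun o : Option (Fin r) ↦ o.elim (e 0) (fun t ↦ e (idx t))) :=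
      fun h ↦ h.1 (.of_subsingleton none he)
    exact iff_of_false hdep fun h ↦ hdep ((MinLinearDep.optionElim_prodMk_zero_iff _ _).1 h.1)
  · obtain rfl : d = cyclicDiff F := funext₂ fun j i ↦
      (hd j i).trans (cyclicDiff_apply_of_one_lt hm' j i).symm
    obtain rfl : u = fun (j : Fin m') (i : Fin m) ↦ if (i : ℕ) = j then e 0 i else 0 := funext₂ hu
    exact stmt_12_general _ (sum_ite_val_eq hmm' (e 0))
end
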